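/- arXiv:1803.06118 — 2 statements merged into one kernel-verified Lean document; each statement's English description precedes it below -/
import Mathlib

section
/- Let n ≥ 1, let d be one of the Kendall tau, Hamming or Spearman footrule distances on S_n, and let θ_1, θ_2, θ_3 > 0. Then the map 𝒦'_θ(R,R') = θ_2·exp(−θ_1·d_avg(R,R')) + θ_3·1_{R=R'} is a strictly positive definite kernel on the set of partial rankings of {1,…,n}: for every N and every pairwise distinct partial rankings R_1,…,R_N, the N×N matrix (𝒦'_θ(R_i,R_j))_{1≤i,j≤N} is positive definite. -/
/-!
Each of the three distances is, up to a nonnegative factor, a squared Euclidean distance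
`c * ∑ k, (f π k - f σ k) ^ 2` between feature vectors made of indicator functions:
`1[π i < π j]` for pairs `i < j` (Kendall), `1[π i = v]` with `c = 1/2` (Hamming) and
`1[π i ≤ t]` (footrule). Expanding the square and averaging over the sets `E_R`, which are never
empty, gives `d_avg(R, R') = A(R) + A(R') - 2 c ⟪F(R), F(R')⟫`, where `F(R)` is the mean feature
vector. The averaged distance need not vanish on the diagonal, but this form suffices:
`exp (-θ d_avg(R, R')) = exp (-θ A(R)) * exp (-θ A(R')) * exp (2 θ c ⟪F(R), F(R')⟫)`,
which is a positive semidefinite kernel because the exponential series of a Gram matrix has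
positive semidefinite terms. The nugget `θ₃ 1_{R = R'}` makes the kernel strictly positive definite.
-/

open Finset
open scoped Classical

/-- Kendall's tau distance on the symmetric group `S_n`. -/
def kendallTau {n : ℕ} (π σ : Equiv.Perm (Fin n)) : ℕ :=
  ((Finset.univ : Finset (Fin n × Fin n)).filter fun p =>
    p.1 < p.2 ∧ ((σ p.2 < σ p.1 ∧ π p.1 < π p.2) ∨ (σ p.1 < σ p.2 ∧ π p.2 < π p.1))).card

/-- Hamming distance on the symmetric group `S_n`. -/
def permHammingDist {n : ℕ} (π σ : Equiv.Perm (Fin n)) : ℕ :=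
  (Finset.univ.filter fun i : Fin n => π i ≠ σ i).card

/-- Spearman's footrule distance on the symmetric group `S_n`. -/
def spearmanFootrule {n : ℕ} (π σ : Equiv.Perm (Fin n)) : ℕ :=
  ∑ i : Fin n, ((π i : ℤ) - (σ i : ℤ)).natAbs

/-- A partial ranking of `{1,…,n}`: an ordered tuple `(X_1, …, X_m)` of pairwise disjoint
nonempty subsets of `{1,…,n}`. -/
structure PartialRanking (n : ℕ) where
  m : ℕ
  X : Fin m → Finset (Fin n)
  nonempty : ∀ l, (X l).Nonempty
  disjoint : ∀ l l', l ≠ l' → Disjoint (X l) (X l')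

/-- The set `E_R` of permutations compatible with a partial ranking `R`. -/
def compatSet {n : ℕ} (R : PartialRanking n) : Finset (Equiv.Perm (Fin n)) :=
  Finset.univ.filter fun σ =>
    ∀ l l' : Fin R.m, l < l' → ∀ a ∈ R.X l, ∀ b ∈ R.X l', σ a < σ b

/-- The average distance `d_avg(R,R')` between two partial rankings. -/
noncomputable def davg {n : ℕ} (d : Equiv.Perm (Fin n) → Equiv.Perm (Fin n) → ℕ)
    (R R' : PartialRanking n) : ℝ :=
  (∑ σ ∈ compatSet R, ∑ σ' ∈ compatSet R', (d σ σ' : ℝ)) /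
    ((compatSet R).card * (compatSet R').card)

/-- A symmetric map `K : E × E → ℝ` is a strictly positive definite kernel if for every `N`
and pairwise distinct `x_1, …, x_N` the matrix `(K (x_i) (x_j))` is positive definite. -/
def StrictPosDefKernel {E : Type*} (K : E → E → ℝ) : Prop :=
  ∀ (N : ℕ) (x : Fin N → E), Function.Injective x →
    (Matrix.of fun i j : Fin N => K (x i) (x j)).PosDef

/-- The distance `d` is a nonnegative multiple of the squared Euclidean distance between
finite-dimensional feature vectors. -/
def IsSqEuclidean {n : ℕ} (d : Equiv.Perm (Fin n) → Equiv.Perm (Fin n) → ℕ) : Prop :=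
  ∃ (κ : Type) (_ : Fintype κ) (c : ℝ) (f : Equiv.Perm (Fin n) → κ → ℝ), 0 ≤ c ∧
    ∀ π σ, (d π σ : ℝ) = c * ∑ k, (f π k - f σ k) ^ 2

lemma isSqEuclidean_kendallTau {n : ℕ} : IsSqEuclidean (kendallTau (n := n)) := by
  refine ⟨Fin n × Fin n, inferInstance, 1,
    fun π p => if p.1 < p.2 ∧ π p.1 < π p.2 then 1 else 0, zero_le_one, fun π σ => ?_⟩
  rw [kendallTau, Finset.card_filter, one_mul]
  push_cast
  refine Finset.sum_congr rfl fun p _ => ?_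
  by_cases hp : p.1 < p.2
  · have h1 : π p.2 < π p.1 ↔ ¬ π p.1 < π p.2 := by
      have := π.injective.ne hp.ne
      rw [not_lt]
      exact ⟨le_of_lt, fun h => lt_of_le_of_ne h this.symm⟩
    have h2 : σ p.2 < σ p.1 ↔ ¬ σ p.1 < σ p.2 := by
      have := σ.injective.ne hp.ne
      rw [not_lt]
      exact ⟨le_of_lt, fun h => lt_of_le_of_ne h this.symm⟩
    simp only [h1, h2]
    by_cases ha : π p.1 < π p.2 <;> by_cases hb : σ p.1 < σ p.2 <;> simp [hp, ha, hb]
  · simp [hp]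

lemma isSqEuclidean_permHammingDist {n : ℕ} : IsSqEuclidean (permHammingDist (n := n)) := by
  refine ⟨Fin n × Fin n, inferInstance, 1 / 2,
    fun π p => if π p.1 = p.2 then 1 else 0, by norm_num, fun π σ => ?_⟩
  rw [permHammingDist, Finset.card_filter, Fintype.sum_prod_type, Finset.mul_sum]
  push_cast
  refine Finset.sum_congr rfl fun i _ => ?_
  have key : ∀ v : Fin n, ((if π i = v then (1 : ℝ) else 0) - (if σ i = v then 1 else 0)) ^ 2 =
      (if π i = v then 1 else 0) + (if σ i = v then 1 else 0)
        - 2 * (if π i = v then (if σ i = π i then 1 else 0) else 0) := by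
    intro v
    by_cases ha : π i = v
    · subst ha
      by_cases hb : σ i = π i <;> (simp [hb]; try norm_num)
    · by_cases hb : σ i = v <;> simp [ha, hb]
  simp only [key, Finset.sum_sub_distrib, Finset.sum_add_distrib, ← Finset.mul_sum,
    Finset.sum_ite_eq, Finset.mem_univ, if_true]
  by_cases h : π i = σ i
  · simp [h]
    norm_num
  · simp [h, Ne.symm h]
    norm_num

/-- The distance `|x - y|` counts the thresholds separating `x` from `y`. -/
lemma natAbs_sub_eq_sum_threshold {n : ℕ} (x y : Fin n) :
    (((x : ℤ) - (y : ℤ)).natAbs : ℝ) =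
      ∑ t : Fin n, ((if x ≤ t then (1 : ℝ) else 0) - (if y ≤ t then 1 else 0)) ^ 2 := by
  wlog h : x ≤ y generalizing x y
  · have := this y x (le_of_not_ge h)
    rw [← Int.natAbs_neg, neg_sub, this]
    exact Finset.sum_congr rfl fun t _ => by ring
  have key : ∀ t : Fin n, ((if x ≤ t then (1 : ℝ) else 0) - (if y ≤ t then 1 else 0)) ^ 2 =
      if t ∈ Finset.Ico x y then 1 else 0 := by
    intro t
    by_cases ha : x ≤ t
    · by_cases hb : y ≤ t
      · simp [ha, hb]
      · simp [ha, hb, not_le.1 hb]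
    · have hb : ¬ y ≤ t := fun hb => ha (h.trans hb)
      simp [ha, hb]
  simp only [key]
  rw [Finset.sum_ite_mem, Finset.univ_inter, Finset.sum_const, Fin.card_Ico, nsmul_eq_mul, mul_one]
  have h' : (x : ℕ) ≤ y := h
  congr 1
  omega

lemma isSqEuclidean_spearmanFootrule {n : ℕ} : IsSqEuclidean (spearmanFootrule (n := n)) := by
  refine ⟨Fin n × Fin n, inferInstance, 1,
    fun π p => if π p.1 ≤ p.2 then 1 else 0, zero_le_one, fun π σ => ?_⟩
  rw [spearmanFootrule, Fintype.sum_prod_type, one_mul]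
  push_cast only [Nat.cast_sum]
  exact Finset.sum_congr rfl fun i _ => natAbs_sub_eq_sum_threshold (π i) (σ i)

/-- Sorting the elements by the index of their block (elements in no block get index `0`) yields a
compatible permutation. -/
lemma compatSet_nonempty {n : ℕ} (R : PartialRanking n) : (compatSet R).Nonempty := by
  let g : Fin n → ℕ := fun a => if h : ∃ l, a ∈ R.X l then (h.choose : ℕ) else 0
  have hg : ∀ l, ∀ a ∈ R.X l, g a = l := by
    intro l a ha
    have h : ∃ l, a ∈ R.X l := ⟨l, ha⟩
    have h1 : h.choose = l := by
      by_contra hne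
      exact Finset.disjoint_left.1 (R.disjoint _ _ hne) h.choose_spec ha
    simp only [g, dif_pos h, h1]
  refine ⟨(Tuple.sort g)⁻¹, ?_⟩
  rw [compatSet, Finset.mem_filter]
  refine ⟨Finset.mem_univ _, fun l l' hll a ha b hb => ?_⟩
  by_contra hlt
  have := Tuple.monotone_sort g (not_lt.1 hlt)
  simp only [Function.comp_apply, Equiv.Perm.inv_def, Equiv.apply_symm_apply, hg l a ha, hg l' b hb] at this
  exact absurd hll (not_lt.2 (by exact_mod_cast this))

/-- The averaged distance splits into one-variable terms minus a nonnegative multiple of a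
Gram kernel. -/
lemma exists_davg_eq {n : ℕ} {d : Equiv.Perm (Fin n) → Equiv.Perm (Fin n) → ℕ}
    (hd : IsSqEuclidean d) :
    ∃ (κ : Type) (_ : Fintype κ) (c : ℝ) (A : PartialRanking n → ℝ)
      (F : PartialRanking n → κ → ℝ), 0 ≤ c ∧
      ∀ R R', davg d R R' = A R + A R' - c * ∑ k, F R k * F R' k := by
  obtain ⟨κ, hκ, c, f, hc, hf⟩ := hd
  refine ⟨κ, hκ, 2 * c, fun R => (∑ σ ∈ compatSet R, c * ∑ k, f σ k ^ 2) / (compatSet R).card,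
    fun R k => (∑ σ ∈ compatSet R, f σ k) / (compatSet R).card, by positivity, fun R R' => ?_⟩
  have h1 : ((compatSet R).card : ℝ) ≠ 0 := by
    exact_mod_cast (compatSet_nonempty R).card_pos.ne'
  have h2 : ((compatSet R').card : ℝ) ≠ 0 := by
    exact_mod_cast (compatSet_nonempty R').card_pos.ne'
  have hexp : ∀ σ σ', (d σ σ' : ℝ) =
      c * ∑ k, f σ k ^ 2 + c * ∑ k, f σ' k ^ 2 - 2 * c * ∑ k, f σ k * f σ' k := by
    intro σ σ'
    rw [hf]
    simp only [Finset.mul_sum, ← Finset.sum_add_distrib, ← Finset.sum_sub_distrib]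
    exact Finset.sum_congr rfl fun k _ => by ring
  have hcross : ∑ σ ∈ compatSet R, ∑ σ' ∈ compatSet R', ∑ k, f σ k * f σ' k =
      ∑ k, (∑ σ ∈ compatSet R, f σ k) * (∑ σ' ∈ compatSet R', f σ' k) := by
    simp only [Finset.sum_mul_sum]
    rw [Finset.sum_comm (s := (Finset.univ : Finset κ))]
    exact Finset.sum_congr rfl fun σ _ => Finset.sum_comm
  have hgram : ∑ k, (∑ σ ∈ compatSet R, f σ k) / ((compatSet R).card : ℝ) *
        ((∑ σ ∈ compatSet R', f σ k) / ((compatSet R').card : ℝ)) =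
      (∑ k, (∑ σ ∈ compatSet R, f σ k) * (∑ σ' ∈ compatSet R', f σ' k)) /
        ((compatSet R).card * (compatSet R').card) := by
    rw [Finset.sum_div]
    exact Finset.sum_congr rfl fun k _ => div_mul_div_comm _ _ _ _
  rw [hgram, ← hcross, davg]
  simp only [hexp, Finset.sum_sub_distrib, Finset.sum_add_distrib, Finset.sum_const,
    nsmul_eq_mul, ← Finset.mul_sum]
  field_simp

/-- The `m`-th power of a Gram kernel is again a Gram kernel, with features indexed by
`Fin m → κ`. -/
lemma gram_pow_nonneg {ι κ : Type*} [Fintype ι] [Fintype κ] (F : ι → κ → ℝ) (x : ι → ℝ) (m : ℕ) :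
    0 ≤ ∑ i, ∑ j, x i * x j * (∑ k, F i k * F j k) ^ m := by
  have h : ∑ i, ∑ j, x i * x j * (∑ k, F i k * F j k) ^ m =
      ∑ w : Fin m → κ, (∑ i, x i * ∏ s, F i (w s)) ^ 2 := by
    simp only [sq, Finset.sum_mul_sum]
    simp only [Fintype.sum_pow, Finset.mul_sum, Finset.prod_mul_distrib]
    rw [Finset.sum_comm (s := (Finset.univ : Finset (Fin m → κ)))]
    refine Finset.sum_congr rfl fun i _ => ?_
    rw [Finset.sum_comm]
    exact Finset.sum_congr rfl fun w _ => Finset.sum_congr rfl fun j _ => by ring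
  rw [h]
  positivity

/-- The entrywise exponential of a nonnegative multiple of a Gram kernel is positive
semidefinite. -/
lemma exp_gram_nonneg {ι κ : Type*} [Fintype ι] [Fintype κ] (F : ι → κ → ℝ) (x : ι → ℝ) {c : ℝ}
    (hc : 0 ≤ c) :
    0 ≤ ∑ i, ∑ j, x i * x j * Real.exp (c * ∑ k, F i k * F j k) := by
  have hs : HasSum (fun m : ℕ => ∑ i, ∑ j, x i * x j *
      ((c * ∑ k, F i k * F j k) ^ m / (m.factorial : ℝ)))
      (∑ i, ∑ j, x i * x j * Real.exp (c * ∑ k, F i k * F j k)) := by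
    refine hasSum_sum fun i _ => hasSum_sum fun j _ => HasSum.mul_left _ ?_
    rw [Real.exp_eq_exp_ℝ]
    exact NormedSpace.expSeries_div_hasSum_exp _
  refine hs.nonneg fun m => ?_
  have h : ∑ i, ∑ j, x i * x j * ((c * ∑ k, F i k * F j k) ^ m / (m.factorial : ℝ)) =
      c ^ m / (m.factorial : ℝ) * ∑ i, ∑ j, x i * x j * (∑ k, F i k * F j k) ^ m := by
    simp only [Finset.mul_sum (s := (Finset.univ : Finset ι))]
    exact Finset.sum_congr rfl fun i _ => Finset.sum_congr rfl fun j _ => by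
      rw [mul_pow]
      ring
  rw [h]
  exact mul_nonneg (by positivity) (gram_pow_nonneg F x m)

theorem nugget_avg_kernel_strictly_pos_def_on_partial_rankings (n : ℕ) (hn : 1 ≤ n)
    (d : Equiv.Perm (Fin n) → Equiv.Perm (Fin n) → ℕ)
    (hd : d = kendallTau ∨ d = permHammingDist ∨ d = spearmanFootrule)
    (θ₁ θ₂ θ₃ : ℝ) (hθ₁ : 0 < θ₁) (hθ₂ : 0 < θ₂) (hθ₃ : 0 < θ₃) :
    StrictPosDefKernel (fun R R' : PartialRanking n =>
      θ₂ * Real.exp (-θ₁ * davg d R R') + if R = R' then θ₃ else 0) := by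
  have hsq : IsSqEuclidean d := by
    rcases hd with rfl | rfl | rfl
    · exact isSqEuclidean_kendallTau
    · exact isSqEuclidean_permHammingDist
    · exact isSqEuclidean_spearmanFootrule
  obtain ⟨κ, _, c, A, F, hc, hF⟩ := exists_davg_eq hsq
  intro N R hR
  refine Matrix.PosDef.of_dotProduct_mulVec_pos ?_ fun x hx => ?_
  · refine Matrix.IsHermitian.ext fun i j => ?_
    have hsymm : davg d (R j) (R i) = davg d (R i) (R j) := by
      rw [hF, hF, add_comm (A (R j))]
      simp only [mul_comm (F (R j) _)]
    simp [hsymm, eq_comm]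
  · have hquad : star x ⬝ᵥ ((Matrix.of fun i j : Fin N =>
          θ₂ * Real.exp (-θ₁ * davg d (R i) (R j)) + if R i = R j then θ₃ else 0).mulVec x) =
        θ₂ * (∑ i, ∑ j, (x i * Real.exp (-θ₁ * A (R i))) * (x j * Real.exp (-θ₁ * A (R j))) *
          Real.exp (θ₁ * c * ∑ k, F (R i) k * F (R j) k)) + θ₃ * ∑ i, x i ^ 2 := by
      simp only [dotProduct, Matrix.mulVec, Matrix.of_apply,
        Finset.mul_sum (s := (Finset.univ : Finset (Fin N))), ← Finset.sum_add_distrib, Pi.star_apply, star_trivial]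
      refine Finset.sum_congr rfl fun i _ => ?_
      have hdiag : θ₃ * x i ^ 2 = ∑ j, x i * ((if R i = R j then θ₃ else 0) * x j) := by
        simp only [hR.eq_iff, ite_mul, zero_mul, mul_ite, mul_zero, Finset.sum_ite_eq,
          Finset.mem_univ, if_true]
        ring
      rw [hdiag, ← Finset.sum_add_distrib]
      refine Finset.sum_congr rfl fun j _ => ?_
      have hexp : Real.exp (-θ₁ * davg d (R i) (R j)) = Real.exp (-θ₁ * A (R i)) *
          Real.exp (-θ₁ * A (R j)) * Real.exp (θ₁ * c * ∑ k, F (R i) k * F (R j) k) := by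
        rw [hF, ← Real.exp_add, ← Real.exp_add]
        congr 1
        ring
      rw [hexp]
      ring
    refine lt_of_lt_of_eq ?_ hquad.symm
    have h1 := exp_gram_nonneg (fun i => F (R i)) (fun i => x i * Real.exp (-θ₁ * A (R i)))
      (mul_nonneg hθ₁.le hc)
    obtain ⟨i, hi⟩ := Function.ne_iff.1 hx
    have h2 : 0 < ∑ i, x i ^ 2 :=
      Finset.sum_pos' (fun i _ => sq_nonneg _) ⟨i, Finset.mem_univ _, sq_pos_of_ne_zero hi⟩
    exact add_pos_of_nonneg_of_pos (mul_nonneg hθ₂.le h1) (mul_pos hθ₃ h2)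
end

section
/- Let I and I' be two top-k partial rankings of {1,…,n}. With the notation p, j_l, c_{j_l}, c'_{j_l}, r, m, the average Hamming distance satisfies d_{H,avg}(I,I') = Σ_{l=1}^p 1[c_{j_l} ≠ c'_{j_l}] + m·(n−k−1)/(n−k) + 2r. -/
/-!
The Hamming distance is a sum over items `x` of the indicator of `σ x ≠ σ' x`, so the average
distance is the sum over `x` of the probability that independent uniform `σ ∈ E_I`, `σ' ∈ E_{I'}`
disagree at `x`. If both rankings contain `x`, the values `σ x`, `σ' x` are the fixed positions
of `x`. If exactly one of them does, then one value is among the first `k` ranks and the other is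
not (`le_apply_of_notMem_image`), so they always disagree; there are `2r` such items. If neither
does, then `σ x` is uniform on the `n - k` last ranks, because swapping two of these ranks
preserves `E_I` (`card_fiber_mul`), and the probability of disagreement is `1 - 1/(n - k)`.
-/

open Finset

/-- The set `E_I` of permutations compatible with the top-`k` partial ranking
`I = (i_1, …, i_k)`: those `σ` with `σ(i_l) = l` for `l = 1, …, k`. -/
def topCompat {n k : ℕ} (hk : k ≤ n) (I : Fin k → Fin n) : Finset (Equiv.Perm (Fin n)) :=
  Finset.univ.filter fun σ => ∀ l : Fin k, σ (I l) = Fin.castLE hk l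

/-- Average distance between two finite sets of permutations. -/
noncomputable def davgSets {n : ℕ} (d : Equiv.Perm (Fin n) → Equiv.Perm (Fin n) → ℕ)
    (A B : Finset (Equiv.Perm (Fin n))) : ℝ :=
  (∑ σ ∈ A, ∑ σ' ∈ B, (d σ σ' : ℝ)) / (A.card * B.card)

/-- The 1-based position of `x` in the tuple `I` (and `0` if `x` does not occur in `I`). -/
def pos1 {n k : ℕ} (I : Fin k → Fin n) (x : Fin n) : ℕ :=
  ∑ l : Fin k, if I l = x then l.1 + 1 else 0

/-- The set `{j_1, …, j_p}` of items ranked by both top-`k` partial rankings. -/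
def interJ {n k : ℕ} (I I' : Fin k → Fin n) : Finset (Fin n) :=
  (Finset.univ.image I) ∩ (Finset.univ.image I')

/-- The set `Ĩ` of items ranked by `I` but not by `I'`. -/
def tildeSet {n k : ℕ} (I I' : Fin k → Fin n) : Finset (Fin n) :=
  (Finset.univ.image I) \ interJ I I'

theorem topCompat_nonempty {n k : ℕ} (hk : k ≤ n) (I : Fin k → Fin n)
    (hI : Function.Injective I) : (topCompat hk I).Nonempty := by
  have h := Equiv.Perm.isMultiplyPretransitive (Fin n) k
  obtain ⟨σ, hσ⟩ := h.exists_smul_eq ⟨I, hI⟩ (Fin.castLEEmb hk)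
  refine ⟨σ, ?_⟩
  simp only [topCompat, mem_filter, mem_univ, true_and]
  intro l
  exact DFunLike.congr_fun hσ l

/-- The first `k` ranks are taken by the items of `I`, so any other item is ranked after them. -/
theorem le_apply_of_notMem_image {n k : ℕ} {hk : k ≤ n} {I : Fin k → Fin n}
    {σ : Equiv.Perm (Fin n)} (hσ : σ ∈ topCompat hk I) {x : Fin n}
    (hx : x ∉ univ.image I) : k ≤ (σ x : ℕ) := by
  by_contra! hlt
  simp only [topCompat, mem_filter, mem_univ, true_and] at hσ
  apply hx
  have h : σ (I ⟨σ x, hlt⟩) = σ x := by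
    rw [hσ]
    rfl
  exact mem_image.2 ⟨_, mem_univ _, σ.injective h⟩

theorem apply_lt_of_mem_image {n k : ℕ} {hk : k ≤ n} {I : Fin k → Fin n}
    {σ : Equiv.Perm (Fin n)} (hσ : σ ∈ topCompat hk I) {x : Fin n}
    (hx : x ∈ univ.image I) : (σ x : ℕ) < k := by
  simp only [topCompat, mem_filter, mem_univ, true_and] at hσ
  obtain ⟨l, -, rfl⟩ := mem_image.1 hx
  rw [hσ]
  exact l.2

/-- Left multiplication by the transposition of two ranks `v, w ≥ k` maps `E_I` to itself and
turns the permutations with `σ x = v` into those with `σ x = w`. -/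
theorem card_fiber_le {n k : ℕ} (hk : k ≤ n) (I : Fin k → Fin n) (x v w : Fin n)
    (hv : k ≤ (v : ℕ)) (hw : k ≤ (w : ℕ)) :
    #{σ ∈ topCompat hk I | σ x = v} ≤ #{σ ∈ topCompat hk I | σ x = w} := by
  refine card_le_card_of_injOn (fun σ => Equiv.swap v w * σ) ?_ (mul_right_injective _).injOn
  intro σ hσ
  simp only [topCompat, coe_filter, mem_filter, mem_univ, true_and, Set.mem_ofPred_eq] at hσ ⊢
  refine ⟨fun l => ?_, by simp [hσ.2]⟩
  have hl := l.2
  rw [Equiv.Perm.mul_apply, hσ.1 l, Equiv.swap_apply_of_ne_of_ne]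
  · intro h
    have := congrArg Fin.val h
    simp only [Fin.val_castLE] at this
    omega
  · intro h
    have := congrArg Fin.val h
    simp only [Fin.val_castLE] at this
    omega

/-- For an unranked item `x`, the value `σ x` is uniformly distributed on the `n - k` last
ranks as `σ` ranges over `E_I`. -/
theorem card_fiber_mul {n k : ℕ} (hk : k ≤ n) (I : Fin k → Fin n) (x v : Fin n)
    (hx : x ∉ univ.image I) (hv : k ≤ (v : ℕ)) :
    (n - k) * #{σ ∈ topCompat hk I | σ x = v} = #(topCompat hk I) := by
  have h := card_eq_sum_card_fiberwise (s := topCompat hk I) (f := fun σ => σ x)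
    (t := univ.filter fun w : Fin n => k ≤ (w : ℕ))
    (fun σ hσ => by simpa using le_apply_of_notMem_image hσ hx)
  have hc : #(univ.filter fun w : Fin n => k ≤ (w : ℕ)) = n - k := by
    have h1 := card_filter_add_card_filter_not (s := (univ : Finset (Fin n)))
      (fun w : Fin n => (w : ℕ) < k)
    simp only [not_lt, Fin.card_filter_val_lt, card_univ, Fintype.card_fin] at h1
    omega
  rw [h, sum_congr rfl (g := fun _ => #{σ ∈ topCompat hk I | σ x = v}), sum_const, hc, smul_eq_mul]
  intro w hw
  have hw' : k ≤ (w : ℕ) := by simpa using hw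
  exact le_antisymm (card_fiber_le hk I x w v hw' hv) (card_fiber_le hk I x v w hv hw')

theorem pos1_apply {n k : ℕ} {I : Fin k → Fin n} (hI : Function.Injective I) (l : Fin k) :
    pos1 I (I l) = l + 1 := by
  simp [pos1, hI.eq_iff]

/-- The rank of a ranked item `x` under a compatible permutation is its position in `I`
(shifted, since `pos1` counts from `1` and ranks count from `0`). -/
theorem pos1_eq_of_mem {n k : ℕ} {hk : k ≤ n} {I : Fin k → Fin n} (hI : Function.Injective I)
    {σ : Equiv.Perm (Fin n)} (hσ : σ ∈ topCompat hk I) {x : Fin n}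
    (hx : x ∈ univ.image I) : pos1 I x = (σ x : ℕ) + 1 := by
  simp only [topCompat, mem_filter, mem_univ, true_and] at hσ
  obtain ⟨l, -, rfl⟩ := mem_image.1 hx
  rw [hσ, pos1_apply hI]
  rfl

/-- The number of pairs in `E_I × E_{I'}` disagreeing at `x`, for `x` in neither ranking. -/
theorem sum_disagree_of_notMem {n k : ℕ} (hk : k < n) (I I' : Fin k → Fin n) (x : Fin n)
    (hx : x ∉ univ.image I) (hx' : x ∉ univ.image I') :
    ∑ σ ∈ topCompat hk.le I, ∑ σ' ∈ topCompat hk.le I', (if σ x ≠ σ' x then (1 : ℝ) else 0) =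
      ((n : ℝ) - k - 1) / ((n : ℝ) - k) *
        (#(topCompat hk.le I) * #(topCompat hk.le I')) := by
  have hnk : (n : ℝ) - k ≠ 0 := by
    have : (k : ℝ) < n := by exact_mod_cast hk
    linarith
  have key : ∀ σ ∈ topCompat hk.le I,
      ∑ σ' ∈ topCompat hk.le I', (if σ x ≠ σ' x then (1 : ℝ) else 0) =
        ((n : ℝ) - k - 1) / ((n : ℝ) - k) * #(topCompat hk.le I') := by
    intro σ hσ
    have h1 := card_fiber_mul hk.le I' x (σ x) hx' (le_apply_of_notMem_image hσ hx)
    have h2 := card_filter_add_card_filter_not (s := topCompat hk.le I') (fun σ' => σ' x = σ x)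
    have h1' : ((n : ℝ) - k) * #{σ' ∈ topCompat hk.le I' | σ' x = σ x} =
        #(topCompat hk.le I') := by
      rw [← Nat.cast_sub hk.le]
      exact_mod_cast h1
    have h2' : (#{σ' ∈ topCompat hk.le I' | σ' x = σ x} : ℝ) +
        #{σ' ∈ topCompat hk.le I' | ¬ σ' x = σ x} = #(topCompat hk.le I') := by
      exact_mod_cast h2
    rw [sum_boole]
    simp only [ne_comm (a := σ x), ne_eq]
    field_simp
    linear_combination ((n : ℝ) - k) * h2' - h1'
  rw [sum_congr rfl key, sum_const, nsmul_eq_mul]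
  ring

theorem card_image_sdiff {n k : ℕ} {I : Fin k → Fin n} (hI : Function.Injective I)
    {J : Finset (Fin n)} (hJ : J ⊆ univ.image I) : #(univ.image I \ J) = k - #J := by
  rw [card_sdiff_of_subset hJ, card_image_of_injective _ hI, card_univ, Fintype.card_fin]

/-- Proposition 3 (Hamming case): explicit formula for the average Hamming distance
between two top-`k` partial rankings.  The sum `Σ_{l=1}^p 1[c_{j_l} ≠ c'_{j_l}]` is
expressed as the number of common items whose positions in `I` and `I'` differ. -/
theorem davg_hamming_topk (n k : ℕ) (hk : k < n) (I I' : Fin k → Fin n)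
    (hI : Function.Injective I) (hI' : Function.Injective I') :
    let p : ℕ := (interJ I I').card
    let r : ℕ := k - p
    let m : ℕ := n - ((Finset.univ.image I) ∪ (Finset.univ.image I')).card
    davgSets permHammingDist (topCompat hk.le I) (topCompat hk.le I') =
      (((interJ I I').filter fun x => pos1 I x ≠ pos1 I' x).card : ℝ)
      + (m : ℝ) * ((n : ℝ) - (k : ℝ) - 1) / ((n : ℝ) - (k : ℝ))
      + 2 * (r : ℝ) := by
  intro p r m
  set A := topCompat hk.le I with hA
  set B := topCompat hk.le I' with hB
  set S := univ.image I with hS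
  set S' := univ.image I' with hS'
  have hA0 : (#A : ℝ) ≠ 0 := by
    exact_mod_cast (topCompat_nonempty hk.le I hI).card_pos.ne'
  have hB0 : (#B : ℝ) ≠ 0 := by
    exact_mod_cast (topCompat_nonempty hk.le I' hI').card_pos.ne'
  have hJ : interJ I I' = S ∩ S' := rfl
  have hm : #(S ∪ S')ᶜ = m := by rw [card_compl, Fintype.card_fin]
  -- The number of disagreeing pairs at a fixed item, split by which rankings contain the item.
  have key : ∀ x : Fin n, ∑ σ ∈ A, ∑ σ' ∈ B, (if σ x ≠ σ' x then (1 : ℝ) else 0) =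
      ((if x ∈ (S ∩ S').filter (fun x => pos1 I x ≠ pos1 I' x) then 1 else 0) +
        (if x ∈ (S ∪ S')ᶜ then ((n : ℝ) - k - 1) / ((n : ℝ) - k) else 0) +
        (if x ∈ S \ (S ∩ S') then 1 else 0) + (if x ∈ S' \ (S ∩ S') then 1 else 0)) *
        (#A * #B) := by
    intro x
    have hconst : ∀ c : ℝ, (∀ σ ∈ A, ∀ σ' ∈ B, (if σ x ≠ σ' x then (1 : ℝ) else 0) = c) →
        ∑ σ ∈ A, ∑ σ' ∈ B, (if σ x ≠ σ' x then (1 : ℝ) else 0) = c * (#A * #B) := by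
      intro c hc
      rw [sum_congr rfl fun σ hσ => sum_congr rfl (hc σ hσ)]
      simp only [sum_const, nsmul_eq_mul]
      ring
    by_cases h : x ∈ S <;> by_cases h' : x ∈ S'
    · apply hconst
      intro σ hσ σ' hσ'
      have e := pos1_eq_of_mem hI hσ h
      have e' := pos1_eq_of_mem hI' hσ' h'
      simp [h, h', e, e', Fin.ext_iff]
    · apply hconst
      intro σ hσ σ' hσ'
      have e := apply_lt_of_mem_image hσ h
      have e' := le_apply_of_notMem_image hσ' h'
      have : σ x ≠ σ' x := fun he => by rw [he] at e; omega
      simp [h, h', this]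
    · apply hconst
      intro σ hσ σ' hσ'
      have e := le_apply_of_notMem_image hσ h
      have e' := apply_lt_of_mem_image hσ' h'
      have : σ x ≠ σ' x := fun he => by rw [he] at e; omega
      simp [h, h', this]
    · rw [sum_disagree_of_notMem hk I I' x h h']
      simp [h, h', hA, hB]
  have hd : ∑ σ ∈ A, ∑ σ' ∈ B, (permHammingDist σ σ' : ℝ) =
      ∑ x : Fin n, ∑ σ ∈ A, ∑ σ' ∈ B, (if σ x ≠ σ' x then (1 : ℝ) else 0) := by
    rw [sum_comm (s := univ)]
    refine sum_congr rfl fun σ _ => ?_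
    rw [sum_comm (s := univ)]
    refine sum_congr rfl fun σ' _ => ?_
    rw [sum_boole, permHammingDist]
  have hr : #(S \ (S ∩ S')) = r := card_image_sdiff hI inter_subset_left
  have hr' : #(S' \ (S ∩ S')) = r := card_image_sdiff hI' inter_subset_right
  rw [davgSets, hd, sum_congr rfl fun x _ => key x, ← sum_mul,
    mul_div_cancel_right₀ _ (mul_ne_zero hA0 hB0)]
  simp only [sum_add_distrib, sum_ite_mem, univ_inter, sum_const, nsmul_eq_mul, mul_one]
  rw [hm, hr, hr', hJ]
  ring
end
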